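/- Let w ∈ ℝ^N, let x* ∈ ℝ^N be K-sparse with K ≥ 1, let m* ≥ K, let λ be the (m*+1)-st largest value among |w_1|, …, |w_N|, and let θ ∈ ℝ^N be the soft-thresholding of w at level λ, i.e., θ_i = sign(w_i)·max(|w_i| − λ, 0) for each i. Then ‖θ − x*‖₂² ≤ (4 + 2m*)·‖w − x*‖₂². -/

import Mathlib

/-!
Write `u = w - xs` and let `S` be the support of `xs`, so that `|S| ≤ K ≤ m`. Off `S`, shrinking
gives `(θ i - xs i)² = θ i² ≤ w i² = u i²`. On `S`, `|θ i - w i| ≤ lam` gives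
`(θ i - xs i)² ≤ 2 u i² + 2 lam²`. Summing, `‖θ - xs‖² ≤ 2 ‖u‖² + 2 m lam²`. Finally, at least
`m + 1 > |S|` coordinates satisfy `|w j| ≥ lam`, so one of them lies off `S`, where `u j = w j`;
hence `lam² ≤ ‖u‖²`, and the constant `2 + 2 m` already suffices.
-/

open Matrix Finset

noncomputable section

/-- Squared Euclidean norm of a vector. -/
def nsq {n : ℕ} (v : Fin n → ℝ) : ℝ := ∑ i, (v i) ^ 2

/-- A vector is `S`-sparse if it has at most `S` nonzero entries. -/
def Sparse {n : ℕ} (S : ℕ) (v : Fin n → ℝ) : Prop :=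
  (Finset.univ.filter fun i => v i ≠ 0).card ≤ S

/-- Restricted isometry property of order `S` with constant `δ`. -/
def RIP {M N : ℕ} (A : Matrix (Fin M) (Fin N) ℝ) (S : ℕ) (δ : ℝ) : Prop :=
  ∀ z : Fin N → ℝ, Sparse S z →
    (1 - δ) * nsq z ≤ nsq (A.mulVec z) ∧ nsq (A.mulVec z) ≤ (1 + δ) * nsq z

def IsEigenvalue {n : ℕ} (B : Matrix (Fin n) (Fin n) ℝ) (e : ℝ) : Prop :=
  ∃ v : Fin n → ℝ, v ≠ 0 ∧ B.mulVec v = e • v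

def IsMaxEigenvalue {n : ℕ} (B : Matrix (Fin n) (Fin n) ℝ) (e : ℝ) : Prop :=
  IsEigenvalue B e ∧ ∀ μ : ℝ, IsEigenvalue B μ → μ ≤ e

def IsMinEigenvalue {n : ℕ} (B : Matrix (Fin n) (Fin n) ℝ) (e : ℝ) : Prop :=
  IsEigenvalue B e ∧ ∀ μ : ℝ, IsEigenvalue B μ → e ≤ μ

/-- The `(k+1)`-st largest value among `|w 0|, …, |w (n-1)|` (i.e. the entry of
index `k` in the 0-based decreasingly sorted list of absolute values). -/
def kthLargestAbs {n : ℕ} (w : Fin n → ℝ) (k : ℕ) : ℝ :=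
  ((Multiset.map (fun i => |w i|) Finset.univ.val).sort (· ≤ ·)).getD (n - 1 - k) 0

/-- Soft-thresholding of `w` at level `lam`. -/
def softThresh {n : ℕ} (w : Fin n → ℝ) (lam : ℝ) : Fin n → ℝ :=
  fun i => Real.sign (w i) * max (|w i| - lam) 0

/-- At least `k + 1` coordinates have absolute value at least `kthLargestAbs w k`. -/
lemma succ_le_card_kthLargestAbs_le {n : ℕ} (w : Fin n → ℝ) (k : ℕ) (hk : k + 1 ≤ n) :
    k + 1 ≤ (Finset.univ.filter fun i => kthLargestAbs w k ≤ |w i|).card := by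
  set l := (Multiset.map (fun i => |w i|) Finset.univ.val).sort (· ≤ ·) with hl
  have hcoe : (l : Multiset ℝ) = Multiset.map (fun i => |w i|) Finset.univ.val :=
    Multiset.sort_eq _ _
  have hlen : l.length = n := by simp [hl]
  have hlt : n - 1 - k < l.length := by omega
  have hval : kthLargestAbs w k = l[n - 1 - k] := by
    rw [kthLargestAbs, ← hl, List.getD_eq_getElem _ _ hlt]
  have hsort : l.Pairwise (· ≤ ·) := Multiset.pairwise_sort _ _
  have hcount : (Finset.univ.filter fun i => kthLargestAbs w k ≤ |w i|).card
      = l.countP (fun a => kthLargestAbs w k ≤ a) := by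
    rw [← Multiset.coe_countP, hcoe, Multiset.countP_map]
    rfl
  -- The entries of the increasing list from index `n - 1 - k` on are the `k + 1` witnesses.
  have hdrop : (l.drop (n - 1 - k)).countP (fun a => kthLargestAbs w k ≤ a) = k + 1 := by
    rw [List.countP_eq_length.2, List.length_drop, hlen]
    · omega
    · intro a ha
      obtain ⟨j, hj, rfl⟩ := List.mem_iff_getElem.1 ha
      rw [List.getElem_drop, hval]
      exact decide_eq_true (hsort.rel_get_of_le (a := ⟨n - 1 - k, hlt⟩)
        (b := ⟨n - 1 - k + j, by rw [List.length_drop] at hj; omega⟩)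
        (Fin.mk_le_mk.2 (Nat.le_add_right _ _)))
  rw [hcount, ← hdrop]
  exact (List.drop_sublist _ _).countP_le

lemma kthLargestAbs_nonneg {n : ℕ} (w : Fin n → ℝ) (k : ℕ) : 0 ≤ kthLargestAbs w k := by
  rw [kthLargestAbs, List.getD_eq_getElem?_getD]
  rcases h : ((Multiset.map (fun i => |w i|) Finset.univ.val).sort (· ≤ ·))[n - 1 - k]? with _ | a
  · simp
  · have ha := List.mem_of_getElem? h
    rw [Multiset.mem_sort, Multiset.mem_map] at ha
    obtain ⟨i, -, rfl⟩ := ha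
    simp

/-- Soft-thresholding shrinks each coordinate towards `0`. -/
lemma softThresh_sq_le {n : ℕ} (w : Fin n → ℝ) {lam : ℝ} (h : 0 ≤ lam) (i : Fin n) :
    softThresh w lam i ^ 2 ≤ w i ^ 2 := by
  unfold softThresh
  have hmax : max (|w i| - lam) 0 ≤ |w i| := max_le (by linarith) (abs_nonneg _)
  have hpos : 0 ≤ max (|w i| - lam) 0 := le_max_right _ _
  rw [← sq_abs (w i), mul_pow]
  rcases Real.sign_apply_eq (w i) with hs | hs | hs <;> rw [hs] <;> nlinarith

lemma softThresh_sub_sq_le {n : ℕ} (w : Fin n → ℝ) {lam : ℝ} (h : 0 ≤ lam) (i : Fin n) :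
    (softThresh w lam i - w i) ^ 2 ≤ lam ^ 2 := by
  unfold softThresh
  apply sq_le_sq'
  all_goals
    rcases lt_trichotomy (w i) 0 with hw | hw | hw
    · rw [Real.sign_of_neg hw, abs_of_neg hw]
      rcases max_cases (-w i - lam) 0 with ⟨hm, _⟩ | ⟨hm, _⟩ <;> rw [hm] <;> linarith
    · simp [hw, h]
    · rw [Real.sign_of_pos hw, abs_of_pos hw]
      rcases max_cases (w i - lam) 0 with ⟨hm, _⟩ | ⟨hm, _⟩ <;> rw [hm] <;> linarith

/-- inequality (31): the soft-thresholded vector is at most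
`(4 + 2 m*)` times as far from the `K`-sparse signal as `w` is. -/
theorem softThresh_dist_le
    {N : ℕ} (K m : ℕ) (hK : 1 ≤ K) (hm : K ≤ m) (hmN : m + 1 ≤ N)
    (w xs : Fin N → ℝ) (hxs : Sparse K xs)
    (lam : ℝ) (hlam : lam = kthLargestAbs w m)
    (θ : Fin N → ℝ) (hθ : θ = softThresh w lam) :
    nsq (θ - xs) ≤ (4 + 2 * (m : ℝ)) * nsq (w - xs) := by
  subst hθ
  have hlam0 : 0 ≤ lam := hlam ▸ kthLargestAbs_nonneg w m
  set S := Finset.univ.filter fun i => xs i ≠ 0 with hS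
  have hScard : S.card ≤ m := le_trans hxs hm
  obtain ⟨j, hjT, hjS⟩ : ∃ j ∈ Finset.univ.filter (fun i => lam ≤ |w i|), j ∉ S := by
    apply Finset.exists_mem_notMem_of_card_lt_card
    have := succ_le_card_kthLargestAbs_le w m hmN
    rw [← hlam] at this
    omega
  have hj : xs j = 0 := by simpa [hS] using hjS
  have hlamle : lam ^ 2 ≤ nsq (w - xs) := by
    calc lam ^ 2 ≤ |w j| ^ 2 := pow_le_pow_left₀ hlam0 (by simpa using hjT) 2
      _ = ((w - xs) j) ^ 2 := by simp [hj]
      _ ≤ nsq (w - xs) := Finset.single_le_sum (f := fun i => ((w - xs) i) ^ 2)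
          (fun i _ => sq_nonneg _) (Finset.mem_univ j)
  have hcoord : ∀ i, ((softThresh w lam - xs) i) ^ 2
      ≤ 2 * ((w - xs) i) ^ 2 + if xs i ≠ 0 then 2 * lam ^ 2 else 0 := by
    intro i
    simp only [Pi.sub_apply]
    split_ifs with hi
    · have := softThresh_sub_sq_le w hlam0 i
      nlinarith [sq_nonneg ((softThresh w lam i - w i) - (w i - xs i))]
    · have := softThresh_sq_le w hlam0 i
      rw [not_not.1 hi]
      nlinarith [sq_nonneg (w i)]
  have hsum : nsq (softThresh w lam - xs) ≤ 2 * nsq (w - xs) + S.card * (2 * lam ^ 2) := by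
    refine (Finset.sum_le_sum fun i _ => hcoord i).trans_eq ?_
    rw [Finset.sum_add_distrib, ← Finset.mul_sum, ← Finset.sum_filter, Finset.sum_const,
      nsmul_eq_mul]
    rfl
  have hScard' : (S.card : ℝ) ≤ m := by exact_mod_cast hScard
  calc nsq (softThresh w lam - xs) ≤ 2 * nsq (w - xs) + S.card * (2 * lam ^ 2) := hsum
    _ ≤ 2 * nsq (w - xs) + m * (2 * nsq (w - xs)) := by gcongr
    _ ≤ (4 + 2 * (m : ℝ)) * nsq (w - xs) := by linarith [(sq_nonneg lam).trans hlamle]
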